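/- Let q be a nonzero polynomial, c > 0, φ(t) = exp(-ct²), I a compact interval, and Λ a sequence of distinct reals with ∑_{λ ∈ Λ, λ≠0} 1/|λ| = ∞. Then the system of translates {q(·−λ)φ(·−λ) : λ ∈ Λ}, restricted to I, has dense linear span in C(I). -/

import Mathlib

namespace PGTranslates
open Filter Topology Asymptotics Bornology

structure PGClass (f : ℂ → ℂ) (M : ℝ) : Prop where
  dc : DiffContOnCl ℂ f {z | 0 < z.re}
  bd : ∃ K, ∀ z : ℂ, 0 ≤ z.re → ‖f z‖ ≤ K
  im : ∀ x : ℝ, ‖f (x * Complex.I)‖ ≤ M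

lemma PGClass.le {f : ℂ → ℂ} {M : ℝ} (h : PGClass f M) {z : ℂ} (hz : 0 ≤ z.re) : ‖f z‖ ≤ M := by
  obtain ⟨K, hK⟩ := h.bd
  refine PhragmenLindelof.right_half_plane_of_bounded_on_real h.dc ?_ ?_ h.im hz
  · refine ⟨1, by norm_num, 0, ?_⟩
    refine IsBigO.of_bound K ?_
    rw [eventually_inf_principal]
    refine Eventually.of_forall fun z hz => ?_
    simpa using hK z (le_of_lt hz)
  · refine ⟨K, ?_⟩
    rw [eventually_map]
    filter_upwards [eventually_ge_atTop 0] with x hx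
    exact hK x (by simpa using hx)

lemma PGClass.divide {f : ℂ → ℂ} {M : ℝ} (h : PGClass f M) {a : ℝ} (ha : 0 < a) (hfa : f a = 0) :
    PGClass (fun z => (z + a) * dslope f a z) M := by
  have hopen : IsOpen {z : ℂ | 0 < z.re} := isOpen_lt continuous_const Complex.continuous_re
  have hmem : (a : ℂ) ∈ {z : ℂ | 0 < z.re} := by simpa using ha
  have hn : {z : ℂ | 0 < z.re} ∈ 𝓝 (a : ℂ) := hopen.mem_nhds hmem
  have hcl : closure {z : ℂ | 0 < z.re} = {z : ℂ | 0 ≤ z.re} := Complex.closure_setOfPred_lt_re 0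
  have hds : DiffContOnCl ℂ (dslope f a) {z | 0 < z.re} := by
    refine ⟨(Complex.differentiableOn_dslope hn).2 h.dc.1, ?_⟩
    exact (continuousOn_dslope (Filter.mem_of_superset hn subset_closure)).2
      ⟨h.dc.2, (h.dc.1.differentiableAt hn)⟩
  have hdc : DiffContOnCl ℂ (fun z => (z + a) * dslope f a z) {z | 0 < z.re} := by
    have h1 : DiffContOnCl ℂ (fun z : ℂ => z + a) {z | 0 < z.re} :=
      (by fun_prop : Differentiable ℂ (fun z : ℂ => z + a)).diffContOnCl
    exact h1.smul hds
  have key : ∀ z : ℂ, z ≠ a → (z + a) * dslope f a z = f z * ((z + a) / (z - a)) := by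
    intro z hz
    rw [dslope_of_ne _ hz, slope_def_field, hfa]
    ring
  refine ⟨hdc, ?_, ?_⟩
  · obtain ⟨K, hK⟩ := h.bd
    have hcomp : IsCompact (Metric.closedBall (a : ℂ) 1 ∩ {z : ℂ | 0 ≤ z.re}) :=
      (isCompact_closedBall _ _).inter_right (isClosed_le continuous_const Complex.continuous_re)
    obtain ⟨K', hK'⟩ := hcomp.exists_bound_of_continuousOn (f := fun z => (z + a) * dslope f a z)
      (hdc.2.mono (by rw [hcl]; exact Set.inter_subset_right))
    refine ⟨max K' (K * (1 + 2 * a)), fun z hz => ?_⟩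
    by_cases hb : z ∈ Metric.closedBall (a : ℂ) 1
    · exact le_max_of_le_left (hK' z ⟨hb, hz⟩)
    · apply le_max_of_le_right
      rw [Metric.mem_closedBall, dist_eq_norm, not_le] at hb
      have hne : z ≠ a := by rintro rfl; simp at hb; linarith
      have hne' : z - a ≠ 0 := sub_ne_zero.2 hne
      rw [key z hne, norm_mul]
      have hK0 : 0 ≤ K := (norm_nonneg _).trans (hK z hz)
      refine mul_le_mul (hK z hz) ?_ (norm_nonneg _) hK0
      rw [norm_div, div_le_iff₀ (by linarith)]
      have : z + a = (z - a) + (2 * a : ℝ) := by push_cast; ring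
      rw [this]
      refine (norm_add_le _ _).trans ?_
      rw [Complex.norm_real, Real.norm_of_nonneg (by linarith)]
      nlinarith
  · intro x
    have hne : (x * Complex.I : ℂ) ≠ a := by
      intro hh
      have := congrArg Complex.re hh
      simp at this
      linarith
    rw [key _ hne, norm_mul, norm_div]
    have : ‖(x * Complex.I + a : ℂ)‖ = ‖(x * Complex.I - a : ℂ)‖ := by
      rw [Complex.norm_def, Complex.norm_def]
      congr 1
      simp [Complex.normSq_apply]
    rw [this, div_self (norm_ne_zero_iff.2 (sub_ne_zero.2 hne)), mul_one]
    exact h.im x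

lemma PGClass.prod_le {M : ℝ} (S : Finset ℝ) : ∀ f : ℂ → ℂ, PGClass f M → (∀ a ∈ S, 0 < a ∧ f a = 0) →
    ∀ x : ℝ, 0 < x → x ∉ S → ‖f x‖ ≤ M * ∏ a ∈ S, (|x - a| / (x + a)) := by
  induction S using Finset.induction_on with
  | empty => intro f hf _ x hx _; simpa using hf.le (z := x) (by simpa using hx.le)
  | insert a S haS ih =>
    intro f hf hS x hx hxS
    have ha := hS a (Finset.mem_insert_self _ _)
    have hxa : x ≠ a := fun h => hxS (h ▸ Finset.mem_insert_self _ _)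
    have key : ∀ y : ℝ, y ≠ a → ((y : ℂ) + a) * dslope f a y = f y * ((y + a) / (y - a)) := by
      intro z hz
      rw [dslope_of_ne _ (by exact_mod_cast hz), slope_def_field, ha.2]
      ring
    have h1 := ih _ (hf.divide ha.1 ha.2) (fun b hb => by
      refine ⟨(hS b (Finset.mem_insert_of_mem hb)).1, ?_⟩
      have : b ≠ a := fun h => haS (h ▸ hb)
      rw [key b this, (hS b (Finset.mem_insert_of_mem hb)).2, zero_mul]) x hx
      (fun h => hxS (Finset.mem_insert_of_mem h))
    rw [key x hxa, norm_mul, norm_div, ← Complex.ofReal_add, ← Complex.ofReal_sub,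
      Complex.norm_real, Complex.norm_real, Real.norm_eq_abs, Real.norm_eq_abs,
      abs_of_pos (by linarith [ha.1] : 0 < x + a)] at h1
    rw [Finset.prod_insert haS]
    have p1 : 0 < x + a := by linarith [ha.1]
    have p2 : 0 < |x - a| := abs_pos.2 (sub_ne_zero.2 hxa)
    calc ‖f x‖ = (‖f x‖ * ((x + a) / |x - a|)) * (|x - a| / (x + a)) := by field_simp
      _ ≤ _ * (|x - a| / (x + a)) := mul_le_mul_of_nonneg_right h1 (by positivity)
      _ = _ := by ring

lemma pg_identity {F : ℂ → ℂ} (hF : Differentiable ℂ F) (T : Set ℝ) (hT : T.Infinite)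
    (a b : ℝ) (hTs : T ⊆ Set.Icc a b) (h0 : ∀ x ∈ T, F x = 0) : ∀ z, F z = 0 := by
  have hT' : ((fun x : ℝ => (x : ℂ)) '' T).Infinite := hT.image (Complex.ofReal_injective.injOn)
  obtain ⟨z₀, -, hz⟩ := hT'.exists_accPt_of_subset_isCompact
    (isCompact_Icc.image Complex.continuous_ofReal) (Set.image_mono hTs)
  have hfr : ∃ᶠ z in 𝓝[≠] z₀, F z = 0 := by
    rw [accPt_iff_frequently_nhdsNE] at hz
    refine hz.mono ?_
    rintro _ ⟨x, hx, rfl⟩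
    exact h0 x hx
  intro z
  exact (AnalyticOnNhd.eqOn_zero_of_preconnected_of_frequently_eq_zero (U := Set.univ)
    (hF.differentiableOn.analyticOnNhd isOpen_univ) isPreconnected_univ trivial hfr) trivial

lemma pg_pos {F : ℂ → ℂ} (hF : Differentiable ℂ F) (C K : ℝ) (d : ℕ) (hK : 0 ≤ K)
    (hb : ∀ z, ‖F z‖ ≤ C * (1 + ‖z‖) ^ d * Real.exp (K * |z.re|))
    (lam : ℕ → ℝ) (hinj : Function.Injective lam)
    (hdiv : ¬ Summable (fun n => if 0 < lam n then 1 / lam n else 0))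
    (h0 : ∀ n, F (lam n) = 0) : ∀ z, F z = 0 := by
  by_cases hinf : {n | lam n ∈ Set.Icc (0:ℝ) 1}.Infinite
  · refine pg_identity hF (lam '' {n | lam n ∈ Set.Icc (0:ℝ) 1}) (hinf.image hinj.injOn) 0 1 ?_ ?_
    · rintro _ ⟨n, hn, rfl⟩; exact hn
    · rintro _ ⟨n, hn, rfl⟩; exact h0 n
  rw [Set.not_infinite] at hinf
  set u : ℕ → ℝ := fun n => if 1 < lam n then 1 / lam n else 0 with hu
  have hu0 : ∀ n, 0 ≤ u n := by
    intro n; simp only [hu]; split_ifs with h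
    · have : 0 < lam n := by linarith
      positivity
    · exact le_rfl
  have hdu : ¬ Summable u := by
    intro hs
    apply hdiv
    refine (summable_congr_cofinite ?_).1 hs
    filter_upwards [hinf.compl_mem_cofinite] with n hn
    simp only [Set.mem_compl_iff, Set.mem_ofPred_eq, Set.mem_Icc, not_and, not_le] at hn
    simp only [hu]
    by_cases h : 0 < lam n
    · rw [if_pos h, if_pos (hn h.le)]
    · rw [if_neg h, if_neg (by linarith)]
  have hC : 0 ≤ C := by
    have := (norm_nonneg _).trans (hb 0)
    simpa using this
  set f : ℂ → ℂ := fun z => F z * Complex.exp (-K * z) / (1 + z) ^ d with hf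
  have hz1 : ∀ z : ℂ, 0 ≤ z.re → 1 + z ≠ 0 := by
    intro z hz h
    have := congrArg Complex.re h
    simp at this
    linarith
  have hcl : closure {z : ℂ | 0 < z.re} = {z : ℂ | 0 ≤ z.re} := Complex.closure_setOfPred_lt_re 0
  have hdiff : DifferentiableOn ℂ f {z | 0 ≤ z.re} := by
    intro z hz
    apply DifferentiableAt.differentiableWithinAt
    have := hF z
    refine DifferentiableAt.div (by fun_prop) (by fun_prop) (pow_ne_zero _ (hz1 z hz))
  have hbd : ∀ z : ℂ, 0 ≤ z.re → ‖f z‖ ≤ C * 2 ^ d := by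
    intro z hz
    have e1 : ‖Complex.exp (-K * z)‖ = Real.exp (-(K * |z.re|)) := by
      rw [Complex.norm_exp]; simp [abs_of_nonneg hz]
    have e2 : (1 + ‖z‖) ≤ 2 * ‖1 + z‖ := by
      have a1 : 1 ≤ ‖1 + z‖ := by
        have := Complex.re_le_norm (1 + z); simp at this; linarith
      have a2 : ‖z‖ ≤ ‖1 + z‖ := by
        rw [Complex.norm_def, Complex.norm_def]
        apply Real.sqrt_le_sqrt
        simp only [Complex.normSq_apply, Complex.add_re, Complex.add_im, Complex.one_re, Complex.one_im]
        nlinarith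
      linarith
    have p : 0 < ‖1 + z‖ := norm_pos_iff.2 (hz1 z hz)
    simp only [hf]
    rw [norm_div, norm_mul, norm_pow, e1, div_le_iff₀ (by positivity)]
    calc ‖F z‖ * Real.exp (-(K * |z.re|)) ≤ (C * (1 + ‖z‖) ^ d * Real.exp (K * |z.re|)) * Real.exp (-(K * |z.re|)) := by
          gcongr; exact hb z
      _ = C * (1 + ‖z‖) ^ d := by rw [mul_assoc, ← Real.exp_add]; simp
      _ ≤ C * (2 * ‖1 + z‖) ^ d := by gcongr
      _ = _ := by rw [mul_pow]; ring
  have hcls : PGClass f (C * 2 ^ d) := by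
    refine ⟨⟨hdiff.mono (fun z (hz : 0 < z.re) => show 0 ≤ z.re from hz.le), ?_⟩, ⟨_, hbd⟩, fun x => hbd _ (by simp)⟩
    rw [hcl]; exact hdiff.continuousOn
  have hzero : ∀ x ∈ Set.Ioo (0:ℝ) 1, F x = 0 := by
    intro x hx
    have hle : ∀ s : Finset ℕ, ‖f x‖ ≤ C * 2 ^ d * Real.exp (-(x * ∑ n ∈ s, u n)) := by
      intro s
      have h1 := PGClass.prod_le ((s.filter (fun n => 1 < lam n)).image lam) f hcls (by
        intro a ha
        rw [Finset.mem_image] at ha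
        obtain ⟨n, hn, rfl⟩ := ha
        rw [Finset.mem_filter] at hn
        refine ⟨by linarith [hn.2], ?_⟩
        simp [hf, h0 n]) x hx.1 (by
        intro ha
        rw [Finset.mem_image] at ha
        obtain ⟨n, hn, h⟩ := ha
        rw [Finset.mem_filter] at hn
        linarith [hn.2, hx.2])
      refine h1.trans ?_
      refine mul_le_mul_of_nonneg_left ?_ (by positivity)
      rw [Finset.prod_image (fun _ _ _ _ h => hinj h), Finset.mul_sum, ← Finset.sum_neg_distrib,
        Real.exp_sum, Finset.prod_filter]
      refine Finset.prod_le_prod ?_ ?_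
      · intro n _
        split_ifs with h
        · have : 0 < x + lam n := by linarith [hx.1]
          positivity
        · exact zero_le_one
      · intro n _
        simp only [hu]
        split_ifs with h
        · have p1 : 0 < x + lam n := by linarith [hx.1]
          have p2 : 0 < lam n := by linarith
          rw [abs_of_neg (by linarith [hx.2])]
          refine le_trans ?_ (Real.add_one_le_exp _)
          rw [div_le_iff₀ p1]
          have : (-(x * (1 / lam n)) + 1) * (x + lam n) - -(x - lam n) = x * (1 - x / lam n) := by
            field_simp; ring
          have h3 : x / lam n ≤ 1 := by rw [div_le_one p2]; linarith [hx.2]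
          have : 0 ≤ x * (1 - x / lam n) := mul_nonneg hx.1.le (by linarith)
          linarith
        · simp
    have hfx : f x = 0 := by
      by_contra hne
      have hpos : 0 < ‖f x‖ := norm_pos_iff.2 hne
      apply hdu
      refine summable_of_sum_le hu0 (c := Real.log (C * 2 ^ d / ‖f x‖) / x) ?_
      intro s
      have h2 := hle s
      have hC2 : 0 < C * 2 ^ d := by
        by_contra hcon
        have : C * 2 ^ d * Real.exp (-(x * ∑ n ∈ s, u n)) ≤ 0 :=
          mul_nonpos_of_nonpos_of_nonneg (not_lt.1 hcon) (Real.exp_pos _).le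
        linarith
      rw [le_div_iff₀ hx.1, Real.le_log_iff_exp_le (by positivity), le_div_iff₀ hpos]
      rw [Real.exp_neg, ← div_eq_mul_inv, le_div_iff₀ (Real.exp_pos _)] at h2
      rw [mul_comm (∑ n ∈ s, u n) x]
      linarith
    have h1 := hz1 x (by simpa using hx.1.le)
    simp only [hf] at hfx
    rw [div_eq_zero_iff, mul_eq_zero] at hfx
    rcases hfx with (h | h) | h
    · exact h
    · exact absurd h (Complex.exp_ne_zero _)
    · exact absurd h (pow_ne_zero _ h1)
  exact pg_identity hF (Set.Ioo 0 1) (Set.Ioo_infinite one_pos) 0 1 Set.Ioo_subset_Icc_self hzero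

lemma pg_zero {F : ℂ → ℂ} (hF : Differentiable ℂ F) (C K : ℝ) (d : ℕ) (hK : 0 ≤ K)
    (hb : ∀ z, ‖F z‖ ≤ C * (1 + ‖z‖) ^ d * Real.exp (K * |z.re|))
    (lam : ℕ → ℝ) (hinj : Function.Injective lam)
    (hdiv : ¬ Summable (fun n => if lam n ≠ 0 then 1 / |lam n| else 0))
    (h0 : ∀ n, F (lam n) = 0) : ∀ z, F z = 0 := by
  by_cases h1 : Summable (fun n => if 0 < lam n then 1 / lam n else 0)
  · by_cases h2 : Summable (fun n => if 0 < -lam n then 1 / -lam n else 0)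
    · exfalso
      apply hdiv
      refine (h1.add h2).congr fun n => ?_
      rcases lt_trichotomy (lam n) 0 with h | h | h
      · rw [if_neg (by linarith), if_pos (by linarith), if_pos h.ne, abs_of_neg h, zero_add]
      · simp [h]
      · rw [if_pos h, if_neg (by linarith), if_pos h.ne', abs_of_pos h, add_zero]
    · have := pg_pos (F := fun z => F (-z)) (by fun_prop) C K d hK
        (fun z => by simpa using hb (-z)) (fun n => -lam n) (fun a b h => hinj (by simpa using h)) h2
        (fun n => by simpa using h0 n)
      intro z
      simpa using this (-z)
  · exact pg_pos hF C K d hK hb lam hinj h1 h0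

noncomputable def pgT (c : ℝ) : Polynomial ℂ →ₗ[ℂ] Polynomial ℂ :=
  LinearMap.mulLeft ℂ (Polynomial.C (2 * c : ℂ) * Polynomial.X) - Polynomial.derivative

lemma pgT_apply (c : ℝ) (p : Polynomial ℂ) :
    pgT c p = Polynomial.C (2 * c : ℂ) * Polynomial.X * p - Polynomial.derivative p := rfl

lemma pgT_invariant_top {c : ℝ} (hc : 0 < c) (N : Submodule ℂ (Polynomial ℂ))
    (h1 : (1 : Polynomial ℂ) ∈ N) (hT : ∀ p ∈ N, pgT c p ∈ N) : ∀ p, p ∈ N := by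
  have hX : ∀ n : ℕ, (Polynomial.X ^ n : Polynomial ℂ) ∈ N := by
    intro n
    induction n using Nat.strong_induction_on with
    | _ n ih =>
      rcases n with _ | n
      · simpa using h1
      · have e : (Polynomial.X ^ (n + 1) : Polynomial ℂ) =
            (2 * c : ℂ)⁻¹ • (pgT c (Polynomial.X ^ n) + (n : ℂ) • Polynomial.X ^ (n - 1)) := by
          have h2 : (2 * c : ℂ) ≠ 0 := by
            have : (c : ℂ) ≠ 0 := by exact_mod_cast hc.ne'
            simpa using this
          rw [eq_inv_smul_iff₀ h2, pgT_apply, Polynomial.derivative_X_pow,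
            Polynomial.smul_eq_C_mul, Polynomial.smul_eq_C_mul]
          ring
        rw [e]
        refine N.smul_mem _ (N.add_mem (hT _ (ih n (Nat.lt_succ_self n))) (N.smul_mem _ (ih (n - 1) (by omega))))
  intro p
  induction p using Polynomial.induction_on' with
  | add p q hp hq => exact N.add_mem hp hq
  | monomial n a =>
    rw [← Polynomial.C_mul_X_pow_eq_monomial, ← Polynomial.smul_eq_C_mul]
    exact N.smul_mem _ (hX n)

lemma pgT_cyclic {c : ℝ} (hc : 0 < c) (N : Submodule ℂ (Polynomial ℂ))
    (hT : ∀ p ∈ N, pgT c p ∈ N)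
    (hE : ∀ (a : ℂ) (p : Polynomial ℂ), pgT c p - a • p ∈ N → p ∈ N)
    (q : Polynomial ℂ) (hq : q ≠ 0) (hqN : q ∈ N) : ∀ p, p ∈ N := by
  have hs : ∀ p : Polynomial ℂ, p ∈ LinearMap.range
      ((LinearMap.applyₗ (1 : Polynomial ℂ)).comp (Polynomial.aeval (R := ℂ) (pgT c)).toLinearMap) := by
    refine pgT_invariant_top hc _ ⟨1, by simp⟩ ?_
    rintro _ ⟨r, rfl⟩
    exact ⟨Polynomial.X * r, by simp⟩
  obtain ⟨r, hr⟩ := hs q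
  have hr' : (Polynomial.aeval (pgT c) r) 1 = q := by simpa using hr
  have hr0 : r ≠ 0 := by rintro rfl; simp at hr'; exact hq hr'.symm
  have main : ∀ n : ℕ, ∀ r : Polynomial ℂ, r.natDegree = n → r ≠ 0 →
      (Polynomial.aeval (pgT c) r) 1 ∈ N → (1 : Polynomial ℂ) ∈ N := by
    intro n
    induction n with
    | zero =>
      intro r hn h0 hN
      obtain ⟨a, rfl⟩ := Polynomial.natDegree_eq_zero.1 hn
      have ha : a ≠ 0 := by simpa using h0
      have := N.smul_mem a⁻¹ hN
      simpa [Polynomial.aeval_C, Module.algebraMap_end_apply, smul_smul, ha] using this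
    | succ n ih =>
      intro r hn h0 hN
      obtain ⟨a, ha⟩ := IsAlgClosed.exists_root r (by
        rw [Polynomial.degree_eq_natDegree h0, hn]; norm_cast)
      obtain ⟨s, rfl⟩ := Polynomial.dvd_iff_isRoot.2 ha
      have hs0 : s ≠ 0 := right_ne_zero_of_mul h0
      refine ih s ?_ hs0 (hE a _ ?_)
      · rw [Polynomial.natDegree_mul (Polynomial.X_sub_C_ne_zero a) hs0, Polynomial.natDegree_X_sub_C] at hn
        omega
      · simpa [Module.algebraMap_end_apply] using hN
  exact pgT_invariant_top hc N (main _ r rfl hr0 (hr'.symm ▸ hqN)) hT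

noncomputable def pgE (c A B : ℝ) (p : Polynomial ℂ) (z : ℂ) : C(Set.Icc A B, ℂ) :=
  ⟨fun t => p.eval (((t : ℝ) : ℂ) - z) * Complex.exp (-(c : ℂ) * (((t : ℝ) : ℂ) - z) ^ 2), by
    have := p.continuous
    fun_prop⟩

lemma pgE_apply (c A B : ℝ) (p : Polynomial ℂ) (z : ℂ) (t : Set.Icc A B) :
    pgE c A B p z t = p.eval (((t : ℝ) : ℂ) - z) * Complex.exp (-(c : ℂ) * (((t : ℝ) : ℂ) - z) ^ 2) := rfl

noncomputable def pgtau (A B : ℝ) : C(Set.Icc A B, ℂ) := ⟨fun t => ((t : ℝ) : ℂ), by fun_prop⟩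

lemma pgE_eq (c A B : ℝ) (p : Polynomial ℂ) (z : ℂ) :
    pgE c A B p z = Polynomial.aeval (pgtau A B - z • 1) p *
      NormedSpace.exp (-(c : ℂ) • (pgtau A B - z • 1) ^ 2) := by
  ext t
  have hev : ∀ y : C(Set.Icc A B, ℂ), (NormedSpace.exp y) t = Complex.exp (y t) := by
    intro y
    have := NormedSpace.map_exp (ContinuousMap.evalAlgHom ℂ ℂ t : C(Set.Icc A B, ℂ) →ₐ[ℂ] ℂ)
      (continuous_eval_const (F := C(Set.Icc A B, ℂ)) t) y
    rw [Complex.exp_eq_exp_ℂ]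
    exact this
  have hp : (Polynomial.aeval (pgtau A B - z • 1) p) t = p.eval (((t : ℝ) : ℂ) - z) := by
    have := Polynomial.aeval_algHom_apply (ContinuousMap.evalAlgHom ℂ ℂ t : C(Set.Icc A B, ℂ) →ₐ[ℂ] ℂ) (pgtau A B - z • 1) p
    refine this.symm.trans ?_
    rw [Polynomial.coe_aeval_eq_eval]
    congr 1
    simp [pgtau]
  rw [pgE_apply, ContinuousMap.mul_apply, hp, hev]
  simp [pgtau]

lemma pg_aeval_deriv {R : Type*} [NormedCommRing R] [NormedAlgebra ℂ R] {y : ℂ → R} {y' : R} {z : ℂ}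
    (hy : HasDerivAt y y' z) (p : Polynomial ℂ) :
    HasDerivAt (fun z => Polynomial.aeval (y z) p) (Polynomial.aeval (y z) (Polynomial.derivative p) * y') z := by
  induction p using Polynomial.induction_on' with
  | add p q hp hq => simpa [add_mul] using! hp.add hq
  | monomial n a =>
    have := (hy.pow n).const_smul a
    simp only [← Polynomial.C_mul_X_pow_eq_monomial, ← Polynomial.smul_eq_C_mul]
    convert! this using 1
    · ext z; simp
    · simp [Polynomial.derivative_X_pow]

lemma pgE_deriv (c A B : ℝ) (p : Polynomial ℂ) (z : ℂ) :
    HasDerivAt (pgE c A B p) (pgE c A B (pgT c p) z) z := by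
  have hy : HasDerivAt (fun z : ℂ => pgtau A B - z • 1) (-1) z := by
    have := ((hasDerivAt_id z).smul_const (1 : C(Set.Icc A B, ℂ))).const_sub (pgtau A B)
    simpa using! this
  have h1 := pg_aeval_deriv hy p
  have h2 := (hy.pow 2).const_smul (-(c : ℂ))
  have h3 := (hasFDerivAt_exp (𝕂 := ℂ)).comp_hasDerivAt z h2
  have h4 := h1.mul h3
  rw [show pgE c A B p = _ from funext (pgE_eq c A B p)]
  refine h4.congr_deriv ?_
  rw [pgE_eq, pgT_apply]
  simp only [map_sub, map_mul, Polynomial.aeval_C, Polynomial.aeval_X]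
  change _ * -1 * NormedSpace.exp (-(c : ℂ) • (pgtau A B - z • 1) ^ 2) +
    _ * (NormedSpace.exp (-(c : ℂ) • (pgtau A B - z • 1) ^ 2) *
      (-(c : ℂ) • (((2 : ℕ) : C(Set.Icc A B, ℂ)) * (pgtau A B - z • 1) ^ (2 - 1) * -1))) = _
  generalize NormedSpace.exp (-(c : ℂ) • (pgtau A B - z • 1) ^ 2) = E
  generalize pgtau A B - z • 1 = Y
  generalize Polynomial.aeval Y p = P
  generalize Polynomial.aeval Y (Polynomial.derivative p) = D
  ext t
  have hal : ∀ k : ℂ, (algebraMap ℂ C(Set.Icc A B, ℂ) k) t = k := fun k => rfl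
  simp only [hal, ContinuousMap.add_apply, ContinuousMap.mul_apply, ContinuousMap.sub_apply,
    ContinuousMap.smul_apply, ContinuousMap.neg_apply,
    ContinuousMap.one_apply, ContinuousMap.pow_apply, ContinuousMap.natCast_apply, smul_eq_mul]
  push_cast
  ring

lemma pg_poly_bound (p : Polynomial ℂ) :
    ∃ C : ℝ, 0 ≤ C ∧ ∀ w : ℂ, ‖p.eval w‖ ≤ C * (1 + ‖w‖) ^ p.natDegree := by
  refine ⟨∑ i ∈ Finset.range (p.natDegree + 1), ‖p.coeff i‖, by positivity, fun w => ?_⟩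
  rw [Polynomial.eval_eq_sum_range, Finset.sum_mul]
  refine (norm_sum_le _ _).trans (Finset.sum_le_sum fun i hi => ?_)
  rw [norm_mul, norm_pow]
  have h1 : ‖w‖ ^ i ≤ (1 + ‖w‖) ^ i := by gcongr; linarith
  have h2 : (1 + ‖w‖) ^ i ≤ (1 + ‖w‖) ^ p.natDegree :=
    pow_le_pow_right₀ (by linarith [norm_nonneg w]) (by have := Finset.mem_range.1 hi; omega)
  exact mul_le_mul_of_nonneg_left (h1.trans h2) (norm_nonneg _)

lemma pg_R (A B : ℝ) (t : Set.Icc A B) : |(t : ℝ)| ≤ |A| + |B| := by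
  obtain ⟨t, h1, h2⟩ := t
  rw [abs_le]
  constructor
  · linarith [neg_abs_le A, abs_nonneg B]
  · linarith [le_abs_self B, abs_nonneg A]

lemma pg_norm_exp (c : ℝ) (t x : ℝ) :
    ‖Complex.exp (-(c : ℂ) * ((t : ℂ) - x) ^ 2)‖ = Real.exp (-c * (t - x) ^ 2) := by
  rw [show -(c : ℂ) * ((t : ℂ) - x) ^ 2 = ((-c * (t - x) ^ 2 : ℝ) : ℂ) by push_cast; ring,
    Complex.norm_exp, Complex.ofReal_re]

lemma pgE_add (c A B : ℝ) (p q : Polynomial ℂ) (z : ℂ) :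
    pgE c A B (p + q) z = pgE c A B p z + pgE c A B q z := by
  ext t; simp [pgE_apply, add_mul]

lemma pgE_smul (c A B : ℝ) (a : ℂ) (p : Polynomial ℂ) (z : ℂ) :
    pgE c A B (a • p) z = a • pgE c A B p z := by
  ext t; simp [pgE_apply, mul_assoc]

lemma pg_decay {c : ℝ} (hc : 0 < c) (A B : ℝ) (L : StrongDual ℂ C(Set.Icc A B, ℂ)) (p : Polynomial ℂ) (a : ℂ)
    (h : ∀ z, L (pgE c A B (pgT c p) z) = a * L (pgE c A B p z)) : ∀ z, L (pgE c A B p z) = 0 := by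
  have hW : ∀ z, HasDerivAt (fun z => L (pgE c A B p z)) (a * L (pgE c A B p z)) z := by
    intro z
    rw [← h z]
    exact L.hasFDerivAt.comp_hasDerivAt z (pgE_deriv c A B p z)
  have hG : ∀ z, HasDerivAt (fun z => L (pgE c A B p z) * Complex.exp (-a * z)) 0 z := by
    intro z
    have h2 : HasDerivAt (fun z => Complex.exp (-a * z)) (Complex.exp (-a * z) * (-a * 1)) z :=
      ((hasDerivAt_id z).const_mul (-a)).cexp
    refine ((hW z).mul h2).congr_deriv ?_
    ring
  have hconst : ∀ z, L (pgE c A B p z) * Complex.exp (-a * z) = L (pgE c A B p 0) := by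
    intro z
    have := is_const_of_deriv_eq_zero (fun z => (hG z).differentiableAt) (fun z => (hG z).deriv) z 0
    simpa using this
  obtain ⟨C, hC, hCp⟩ := pg_poly_bound p
  set d := p.natDegree
  set R := |A| + |B| with hR
  have hR0 : 0 ≤ R := by positivity
  set k : ℝ := d + ‖a‖ with hk
  have hk0 : 0 ≤ k := by positivity
  have hbound : ∀ x : ℝ, R + (k + 1) / c ≤ x →
      ‖L (pgE c A B p 0)‖ ≤ ‖L‖ * (C * Real.exp (‖a‖ * R) * Real.exp (-(x - R))) := by
    intro x hx
    have hx0 : 0 ≤ x := by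
      have : 0 ≤ (k + 1) / c := by positivity
      linarith
    rw [← hconst x, mul_comm, ← smul_eq_mul, ← map_smul]
    refine (L.le_opNorm _).trans (mul_le_mul_of_nonneg_left ?_ (norm_nonneg _))
    rw [ContinuousMap.norm_le _ (by positivity)]
    intro t
    rw [ContinuousMap.smul_apply, smul_eq_mul, pgE_apply, norm_mul, norm_mul, pg_norm_exp]
    have ht := abs_le.1 (pg_R A B t)
    set s : ℝ := x - t with hs
    have hs1 : (k + 1) / c ≤ s := by rw [hs]; linarith [ht.2]
    have hs0 : 0 ≤ s := le_trans (by positivity) hs1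
    have hcs : k + 1 ≤ c * s := by rw [div_le_iff₀ hc] at hs1; linarith
    have e1 : ‖Complex.exp (-a * x)‖ ≤ Real.exp (‖a‖ * (s + R)) := by
      rw [Complex.norm_exp]
      apply Real.exp_le_exp.2
      refine (Complex.re_le_norm _).trans ?_
      rw [norm_mul, norm_neg, Complex.norm_real, Real.norm_of_nonneg hx0]
      refine mul_le_mul_of_nonneg_left ?_ (norm_nonneg _)
      rw [hs]; linarith [ht.2]
    have e2 : ‖p.eval (((t : ℝ) : ℂ) - x)‖ ≤ C * Real.exp (d * s) := by
      refine (hCp _).trans (mul_le_mul_of_nonneg_left ?_ hC)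
      rw [← Complex.ofReal_sub, Complex.norm_real, Real.norm_eq_abs, abs_sub_comm, ← hs, abs_of_nonneg hs0,
        Real.exp_nat_mul]
      refine pow_le_pow_left₀ (by positivity) ?_ _
      linarith [Real.add_one_le_exp s]
    calc _ ≤ Real.exp (‖a‖ * (s + R)) * ((C * Real.exp (d * s)) * Real.exp (-c * (t - x) ^ 2)) := by
          gcongr
      _ = C * Real.exp (‖a‖ * R) * Real.exp (k * s - c * s ^ 2) := by
          have : k * s - c * s ^ 2 = ‖a‖ * s + (d * s + -c * (t - x) ^ 2) := by rw [hk, hs]; ring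
          rw [this, Real.exp_add, Real.exp_add, mul_add, Real.exp_add]; ring
      _ ≤ _ := by
          gcongr
          have : s * (k + 1) ≤ s * (c * s) := mul_le_mul_of_nonneg_left hcs hs0
          have h3 : x - R ≤ s := by rw [hs]; linarith [ht.2]
          nlinarith
  have hlim : Tendsto (fun x : ℝ => ‖L‖ * (C * Real.exp (‖a‖ * R) * Real.exp (-(x - R)))) atTop (𝓝 0) := by
    have h1 : Tendsto (fun x : ℝ => Real.exp (-(x - R))) atTop (𝓝 0) :=
      Real.tendsto_exp_neg_atTop_nhds_zero.comp (tendsto_atTop_add_const_right _ (-R) tendsto_id)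
    simpa using (h1.const_mul (C * Real.exp (‖a‖ * R))).const_mul ‖L‖
  have h0 : ‖L (pgE c A B p 0)‖ ≤ 0 := by
    refine ge_of_tendsto hlim ?_
    filter_upwards [eventually_ge_atTop (R + (k + 1) / c)] with x hx using hbound x hx
  intro z
  have := hconst z
  rw [norm_le_zero_iff.1 h0] at this
  exact (mul_eq_zero.1 this).resolve_right (Complex.exp_ne_zero _)

lemma pg_weierstrass (A B : ℝ) (f : C(Set.Icc A B, ℂ)) (ε : ℝ) (hε : 0 < ε) :
    ∃ p : Polynomial ℂ, ∀ t : Set.Icc A B, ‖f t - p.eval (((t : ℝ) : ℂ))‖ ≤ ε := by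
  obtain ⟨p, hp⟩ := exists_polynomial_near_continuousMap A B
    ⟨fun t => (f t).re, by fun_prop⟩ (ε / 2) (by positivity)
  obtain ⟨q, hq⟩ := exists_polynomial_near_continuousMap A B
    ⟨fun t => (f t).im, by fun_prop⟩ (ε / 2) (by positivity)
  refine ⟨p.map Complex.ofRealHom + Polynomial.C Complex.I * q.map Complex.ofRealHom, fun t => ?_⟩
  have h1 := (ContinuousMap.norm_coe_le_norm _ t).trans hp.le
  have h2 := (ContinuousMap.norm_coe_le_norm _ t).trans hq.le
  simp only [ContinuousMap.sub_apply, Polynomial.toContinuousMapOn_apply, Polynomial.toContinuousMap_apply,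
    ContinuousMap.coe_mk, Real.norm_eq_abs] at h1 h2
  have e : ∀ r : Polynomial ℝ, (r.map Complex.ofRealHom).eval ((t : ℝ) : ℂ) = ((r.eval (t : ℝ) : ℝ) : ℂ) := by
    intro r
    exact Polynomial.eval_map_apply (f := Complex.ofRealHom) (t : ℝ)
  rw [Polynomial.eval_add, Polynomial.eval_mul, Polynomial.eval_C, e, e]
  refine (Complex.norm_le_abs_re_add_abs_im _).trans ?_
  simp only [Complex.sub_re, Complex.sub_im, Complex.add_re, Complex.add_im, Complex.mul_re, Complex.mul_im,
    Complex.I_re, Complex.I_im, Complex.ofReal_re, Complex.ofReal_im]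
  rw [abs_sub_comm] at h1 h2
  ring_nf at h1 h2 ⊢
  linarith

lemma pg_L_zero {c : ℝ} (hc : 0 < c) (A B : ℝ) (L : StrongDual ℂ C(Set.Icc A B, ℂ))
    (h : ∀ p, L (pgE c A B p 0) = 0) (f : C(Set.Icc A B, ℂ)) : L f = 0 := by
  rw [← norm_le_zero_iff]
  have key : ∀ ε : ℝ, 0 < ε → ‖L f‖ ≤ ‖L‖ * ε := by
    intro ε hε
    obtain ⟨p, hp⟩ := pg_weierstrass A B
      ⟨fun t => f t * Complex.exp ((c : ℂ) * ((t : ℝ) : ℂ) ^ 2), by fun_prop⟩ ε hε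
    have : L f = L (f - pgE c A B p 0) := by rw [map_sub, h p, sub_zero]
    rw [this]
    refine (L.le_opNorm _).trans (mul_le_mul_of_nonneg_left ?_ (norm_nonneg _))
    rw [ContinuousMap.norm_le _ hε.le]
    intro t
    have ht := hp t
    have e : (f - pgE c A B p 0) t = (f t * Complex.exp ((c : ℂ) * ((t : ℝ) : ℂ) ^ 2) - p.eval ((t : ℝ) : ℂ)) *
        Complex.exp (-(c : ℂ) * (((t : ℝ) : ℂ) - (0 : ℝ)) ^ 2) := by
      rw [sub_mul, mul_assoc, ← Complex.exp_add, ContinuousMap.sub_apply, pgE_apply]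
      simp
    rw [e, norm_mul, pg_norm_exp]
    have : Real.exp (-c * ((t : ℝ) - 0) ^ 2) ≤ 1 := by
      rw [Real.exp_le_one_iff]; nlinarith [sq_nonneg ((t : ℝ) - 0)]
    calc _ ≤ ε * 1 := mul_le_mul ht this (Real.exp_pos _).le hε.le
      _ = ε := mul_one _
  have hl : Tendsto (fun ε : ℝ => ‖L‖ * ε) (𝓝[>] 0) (𝓝 0) := by
    have : Tendsto (fun ε : ℝ => ‖L‖ * ε) (𝓝 0) (𝓝 (‖L‖ * 0)) := tendsto_id.const_mul _
    rw [mul_zero] at this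
    exact this.mono_left nhdsWithin_le_nhds
  refine ge_of_tendsto hl ?_
  filter_upwards [self_mem_nhdsWithin] with ε hε using key ε hε

lemma pg_growth {c : ℝ} (hc : 0 < c) (A B : ℝ) (L : StrongDual ℂ C(Set.Icc A B, ℂ)) (q : Polynomial ℂ) :
    ∃ C : ℝ, ∀ z : ℂ, ‖L (pgE c A B q z) * Complex.exp (c * z ^ 2)‖ ≤
      C * (1 + ‖z‖) ^ q.natDegree * Real.exp ((2 * c * (|A| + |B|)) * |z.re|) := by
  obtain ⟨C, hC, hCp⟩ := pg_poly_bound q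
  set R := |A| + |B| with hR
  have hR0 : 0 ≤ R := by positivity
  refine ⟨‖L‖ * (C * (1 + R) ^ q.natDegree), fun z => ?_⟩
  rw [mul_comm, ← smul_eq_mul, ← map_smul]
  refine (L.le_opNorm _).trans ?_
  rw [mul_assoc, mul_assoc]
  refine mul_le_mul_of_nonneg_left ?_ (norm_nonneg _)
  rw [ContinuousMap.norm_le _ (by positivity)]
  intro t
  have ht := pg_R A B t
  rw [ContinuousMap.smul_apply, smul_eq_mul, pgE_apply, mul_left_comm, ← Complex.exp_add, norm_mul, mul_assoc, ← mul_assoc]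
  have e1 : ‖q.eval (((t : ℝ) : ℂ) - z)‖ ≤ C * (1 + R) ^ q.natDegree * (1 + ‖z‖) ^ q.natDegree := by
    refine (hCp _).trans ?_
    rw [mul_assoc, ← mul_pow]
    gcongr
    have := norm_sub_le ((t : ℝ) : ℂ) z
    rw [Complex.norm_real, Real.norm_eq_abs] at this
    nlinarith [norm_nonneg z]
  have e2 : ‖Complex.exp (c * z ^ 2 + -(c : ℂ) * (((t : ℝ) : ℂ) - z) ^ 2)‖ ≤ Real.exp ((2 * c * R) * |z.re|) := by
    have : c * z ^ 2 + -(c : ℂ) * (((t : ℝ) : ℂ) - z) ^ 2 = ((2 * c * t : ℝ) : ℂ) * z - ((c * t ^ 2 : ℝ) : ℂ) := by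
      push_cast; ring
    rw [this, Complex.norm_exp]
    apply Real.exp_le_exp.2
    rw [Complex.sub_re, Complex.re_ofReal_mul, Complex.ofReal_re]
    have h1 : (t : ℝ) * z.re ≤ R * |z.re| := by
      refine (le_abs_self _).trans ?_
      rw [abs_mul]
      gcongr
    have h2 : 0 ≤ c * (t : ℝ) ^ 2 := by positivity
    nlinarith
  calc _ ≤ (C * (1 + R) ^ q.natDegree * (1 + ‖z‖) ^ q.natDegree) * Real.exp ((2 * c * R) * |z.re|) := by gcongr
    _ = _ := by ring

lemma pg_hahn_banach {E : Type*} [NormedAddCommGroup E] [NormedSpace ℂ E] (S : Submodule ℂ E)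
    (h : ∀ L : StrongDual ℂ E, (∀ x ∈ S, L x = 0) → ∀ x, L x = 0) (x : E) : x ∈ S.topologicalClosure := by
  by_contra hx
  let _ : NormedSpace ℝ E := NormedSpace.restrictScalars ℝ ℂ E
  obtain ⟨f, u, h1, h2⟩ := RCLike.geometric_hahn_banach_closed_point (𝕜 := ℂ) (E := E)
    (s := (S.topologicalClosure : Set E)) (S.topologicalClosure.restrictScalars ℝ).convex
    S.isClosed_topologicalClosure hx
  have hz : ∀ y ∈ S, f y = 0 := by
    intro y hy
    by_contra hne
    have hm := h1 ((((|u| + 1 : ℝ) : ℂ) * (f y)⁻¹) • y)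
      (S.le_topologicalClosure (S.smul_mem _ hy))
    rw [map_smul, smul_eq_mul, mul_assoc, inv_mul_cancel₀ hne, mul_one] at hm
    have : RCLike.re ((|u| + 1 : ℝ) : ℂ) = |u| + 1 := Complex.ofReal_re _
    rw [this] at hm
    linarith [le_abs_self u]
  have h3 := h1 0 (zero_mem _)
  rw [h f hz x] at h2
  rw [map_zero] at h3
  linarith

end PGTranslates

theorem poly_gaussian_translates_complete (q : Polynomial ℂ) (hq : q ≠ 0)
    (c : ℝ) (hc : 0 < c) (A B : ℝ) (hAB : A ≤ B)
    (lam : ℕ → ℝ) (hinj : Function.Injective lam)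
    (hdiv : ¬ Summable (fun n => if lam n ≠ 0 then 1 / |lam n| else 0)) :
    ∀ (g : ℝ → ℂ), ContinuousOn g (Set.Icc A B) → ∀ ε > 0,
      ∃ h ∈ Submodule.span ℂ (Set.range fun n : ℕ =>
          fun t : ℝ => q.eval ((t : ℂ) - lam n) *
            Complex.exp (-(c : ℂ) * ((t : ℂ) - lam n) ^ 2)),
        ∀ t ∈ Set.Icc A B, ‖g t - h t‖ ≤ ε := by
  intro g hg ε hε
  let fn : ℕ → ℝ → ℂ := fun n t => q.eval ((t : ℂ) - lam n) *
    Complex.exp (-(c : ℂ) * ((t : ℂ) - lam n) ^ 2)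
  let S : Submodule ℂ C(Set.Icc A B, ℂ) :=
    Submodule.span ℂ (Set.range fun n => PGTranslates.pgE c A B q (lam n))
  have hdense : ∀ f : C(Set.Icc A B, ℂ), f ∈ S.topologicalClosure := by
    refine PGTranslates.pg_hahn_banach S ?_
    intro L hL
    refine PGTranslates.pg_L_zero hc A B L ?_
    have hdiff : ∀ p, Differentiable ℂ (fun z => L (PGTranslates.pgE c A B p z)) := fun p z =>
      (L.hasFDerivAt.comp_hasDerivAt z (PGTranslates.pgE_deriv c A B p z)).differentiableAt
    let N : Submodule ℂ (Polynomial ℂ) :=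
      { carrier := {p | ∀ z, L (PGTranslates.pgE c A B p z) = 0}
        add_mem' := by
          intro p r hp hr z
          rw [PGTranslates.pgE_add, map_add, hp z, hr z, add_zero]
        zero_mem' := by
          intro z
          have : PGTranslates.pgE c A B 0 z = 0 := by ext t; simp [PGTranslates.pgE_apply]
          rw [this, map_zero]
        smul_mem' := by
          intro a p hp z
          rw [PGTranslates.pgE_smul, map_smul, hp z, smul_zero] }
    have hqN : q ∈ N := by
      obtain ⟨C, hC⟩ := PGTranslates.pg_growth hc A B L q
      have hz := PGTranslates.pg_zero
        (F := fun z => L (PGTranslates.pgE c A B q z) * Complex.exp (c * z ^ 2))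
        ((hdiff q).mul (by fun_prop)) C _ _ (by positivity) hC lam hinj hdiv (fun n => by
          have : L (PGTranslates.pgE c A B q (lam n)) = 0 := hL _ (Submodule.subset_span ⟨n, rfl⟩)
          simp [this])
      intro z
      exact (mul_eq_zero.1 (hz z)).resolve_right (Complex.exp_ne_zero _)
    have hall : ∀ p, p ∈ N := by
      refine PGTranslates.pgT_cyclic hc N ?_ ?_ q hq hqN
      · intro p hp z
        have h1 := L.hasFDerivAt.comp_hasDerivAt z (PGTranslates.pgE_deriv c A B p z)
        have h2 : (L ∘ PGTranslates.pgE c A B p) = fun _ => 0 := funext hp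
        rw [h2] at h1
        exact h1.unique (hasDerivAt_const z 0)
      · intro a p hp
        refine PGTranslates.pg_decay hc A B L p a fun z => ?_
        have := hp z
        rw [sub_eq_add_neg, ← neg_smul, PGTranslates.pgE_add, PGTranslates.pgE_smul, map_add,
          map_smul, smul_eq_mul] at this
        linear_combination this
    exact fun p => hall p 0
  have hmem := hdense ⟨fun t => g t, continuousOn_iff_continuous_domRestrict.mp hg⟩
  obtain ⟨k, hk, hdist⟩ := Metric.mem_closure_iff.1 hmem ε hε
  have hlift : ∀ k ∈ S, ∃ h ∈ Submodule.span ℂ (Set.range fn), ∀ t : Set.Icc A B, h t = k t := by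
    intro k hk
    induction hk using Submodule.span_induction with
    | mem x hx =>
      obtain ⟨n, rfl⟩ := hx
      exact ⟨fn n, Submodule.subset_span ⟨n, rfl⟩, fun t => rfl⟩
    | zero => exact ⟨0, zero_mem _, fun t => rfl⟩
    | add x y _ _ hx hy =>
      obtain ⟨h1, m1, e1⟩ := hx
      obtain ⟨h2, m2, e2⟩ := hy
      exact ⟨h1 + h2, add_mem m1 m2, fun t => by simp [e1, e2]⟩
    | smul a x _ hx =>
      obtain ⟨h1, m1, e1⟩ := hx
      exact ⟨a • h1, Submodule.smul_mem _ _ m1, fun t => by simp [e1]⟩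
  obtain ⟨h, hh, he⟩ := hlift k hk
  refine ⟨h, hh, fun t ht => ?_⟩
  have h1 := (ContinuousMap.dist_apply_le_dist (⟨t, ht⟩ : Set.Icc A B)).trans hdist.le
  rw [dist_eq_norm, ← he] at h1
  exact h1
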